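/- There exists a nonzero function G ∈ ℰ⁺ that extremizes the problem defining 𝒞⁺(∞), i.e., G(0)/‖G‖₁ = 𝒞⁺(∞). -/

import Mathlib

open MeasureTheory Filter
open scoped FourierTransform Real

/-- The class 𝒜 sharp constant 𝒞(A). -/
noncomputable def Ccal (A : ℝ) : ℝ :=
  sSup { r : ℝ | ∃ F : ℝ → ℂ, Continuous F ∧ Integrable F ∧ F ≠ 0 ∧
    r = (‖F 0‖ - A * ∫ t in {t : ℝ | 1 ≤ |t|}, ‖𝓕 F t‖) / ∫ x : ℝ, ‖F x‖ }

/-- 𝒞(∞), over the bandlimited class ℰ. -/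
noncomputable def CcalInf : ℝ :=
  sSup { r : ℝ | ∃ F : ℝ → ℂ, Continuous F ∧ Integrable F ∧ F ≠ 0 ∧
    Function.support (𝓕 F) ⊆ Set.Icc (-1 : ℝ) 1 ∧
    r = ‖F 0‖ / ∫ x : ℝ, ‖F x‖ }

/-- Fourier transform of a real-valued function, as a real number (its real part). -/
noncomputable def FTr (F : ℝ → ℝ) (t : ℝ) : ℝ := (𝓕 (fun x => (F x : ℂ)) t).re

/-- The class 𝒜⁺ sharp constant 𝒞⁺(A). -/
noncomputable def CcalPlus (A : ℝ) : ℝ :=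
  sSup { r : ℝ | ∃ F : ℝ → ℝ, Continuous F ∧ Integrable F ∧ F ≠ 0 ∧ (∀ x, F (-x) = F x) ∧
    r = (F 0 - A * ∫ t in {t : ℝ | 1 ≤ |t|}, max (FTr F t) 0) / ∫ x : ℝ, |F x| }

/-- 𝒞⁺(∞), over the class ℰ⁺. -/
noncomputable def CcalPlusInf : ℝ :=
  sSup { r : ℝ | ∃ F : ℝ → ℝ, Continuous F ∧ Integrable F ∧ F ≠ 0 ∧ (∀ x, F (-x) = F x) ∧
    (∀ t : ℝ, 1 ≤ |t| → FTr F t ≤ 0) ∧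
    r = F 0 / ∫ x : ℝ, |F x| }

/-- The prime counting function at a real argument. -/
noncomputable def primePi (x : ℝ) : ℕ := Nat.primeCounting ⌊x⌋₊

/-- The Brun–Titchmarsh constant 𝐁. -/
noncomputable def BrunTitchmarsh : ℝ :=
  limsup (fun x : ℝ =>
    ((primePi (x + Real.sqrt x) : ℝ) - (primePi x : ℝ)) / (Real.sqrt x / Real.log x)) atTop


/-!
Normalise a maximising sequence `F n` by `∫ |F n| ≤ 1`. Then `FTr (F n)` is at most the indicator
`χ` of `(-1, 1)`, which makes it integrable with `∫ FTr (F n) = F n 0`, and the inequality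
`|y| ≤ 2χ - y` for `y ≤ χ` gives `∫ |FTr (F n)| ≤ 4 - F n 0`. Hence the `F n` are bounded in `L^∞`
and, by interpolation with `L¹`, in `L²`; a subsequence converges weakly in `L²` to some `u` with
`∫ |u| ≤ 1`.

For a set `s` of finite measure the Fourier transform of its indicator lies in `L²` by Plancherel,
so by the multiplication formula `∫ t in s, FTr (F n) t` tends to `∫ t in s, FTr u t`. Therefore
`FTr u ≤ χ` almost everywhere and `∫ t in s, (χ t - FTr u t) ≤ 2 - CcalPlusInf`. Letting `s` exhaust
the line, `FTr u` is integrable with integral at least `CcalPlusInf`, and the inverse Fourier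
transform of `FTr u`, a continuous representative of the even part of `u`, is an extremizer.
-/

open scoped ComplexConjugate ContDiff ENNReal SchwartzMap Topology

section Fourier

variable {V E : Type*} [NormedAddCommGroup V] [InnerProductSpace ℝ V] [MeasurableSpace V]
  [BorelSpace V] [FiniteDimensional ℝ V] [NormedAddCommGroup E] [NormedSpace ℂ E]

theorem continuous_fourier {f : V → E} (hf : Integrable f) : Continuous (𝓕 f) :=
  VectorFourier.fourierIntegral_continuous Real.continuous_fourierChar (L := innerₗ V)
    continuous_inner hf

theorem continuous_fourierInv {f : V → E} (hf : Integrable f) : Continuous (𝓕⁻ f) := by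
  rw [Real.fourierInv_eq_fourier_comp_neg]
  exact continuous_fourier hf.comp_neg

variable [CompleteSpace E]

theorem integral_fourier_smul_eq {f : V → ℂ} {g : V → E} (hf : Integrable f)
    (hg : Integrable g) : ∫ x, 𝓕 f x • g x = ∫ x, f x • 𝓕 g x := by
  simpa using! VectorFourier.integral_fourierIntegral_smul_eq_flip (L := innerₗ V)
    Real.continuous_fourierChar continuous_inner hf hg

theorem integral_fourierInv_smul_eq {f : V → ℂ} {g : V → E} (hf : Integrable f)
    (hg : Integrable g) : ∫ x, 𝓕⁻ f x • g x = ∫ x, f x • 𝓕⁻ g x := by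
  calc ∫ x, 𝓕⁻ f x • g x = ∫ x, 𝓕 f x • g (-x) := by
        rw [← integral_neg_eq_self]
        simp only [Real.fourierInv_eq_fourier_neg, neg_neg]
    _ = ∫ x, f x • 𝓕⁻ g x := by
        rw [integral_fourier_smul_eq hf hg.comp_neg, Real.fourierInv_eq_fourier_comp_neg]

theorem ae_eq_of_forall_integral_schwartz_smul_eq {f g : V → E} (hf : LocallyIntegrable f)
    (hg : LocallyIntegrable g) (h : ∀ φ : 𝓢(V, ℂ), ∫ x, φ x • f x = ∫ x, φ x • g x) :
    f =ᵐ[volume] g := by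
  refine ae_eq_of_integral_contDiff_smul_eq hf hg fun φ hφ hφc => ?_
  have hφc' : HasCompactSupport fun x => (φ x : ℂ) := hφc.comp_left Complex.ofReal_zero
  simpa using! h (hφc'.toSchwartzMap (Complex.ofRealCLM.contDiff.comp hφ))

theorem fourierInv_fourier_ae_eq {f : V → E} (hf : Integrable f)
    (hf' : Integrable (𝓕 f)) : 𝓕⁻ (𝓕 f) =ᵐ[volume] f := by
  refine ae_eq_of_forall_integral_schwartz_smul_eq (continuous_fourierInv hf').locallyIntegrable
    hf.locallyIntegrable fun φ => ?_
  calc ∫ x, φ x • 𝓕⁻ (𝓕 f) x = ∫ x, (𝓕⁻ φ) x • 𝓕 f x := by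
        rw [SchwartzMap.fourierInv_coe, integral_fourierInv_smul_eq φ.integrable hf']
    _ = ∫ x, 𝓕 (𝓕⁻ φ) x • f x := by
        rw [SchwartzMap.fourier_coe, integral_fourier_smul_eq (𝓕⁻ φ).integrable hf]
    _ = ∫ x, φ x • f x := by rw [FourierTransform.fourier_fourierInv_eq]

theorem tendsto_integral_gaussian_smul_fourier {f : V → E} (hf : Integrable f)
    (hc : ContinuousAt f 0) :
    Tendsto (fun c : ℝ => ∫ w, Complex.exp (-c⁻¹ * ‖w‖ ^ 2) • 𝓕 f w) atTop (𝓝 (f 0)) := by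
  refine (Real.tendsto_integral_gaussian_smul' hf hc).congr' ?_
  filter_upwards [Ioi_mem_atTop 0] with c (hc : 0 < c)
  have hre : 0 < (c⁻¹ : ℂ).re := by norm_cast; positivity
  have hg : Integrable fun w : V => Complex.exp (-c⁻¹ * ‖w‖ ^ 2) := by
    simpa using GaussianFourier.integrable_cexp_neg_mul_sq_norm_add (V := V) hre 0 0
  rw [← integral_fourier_smul_eq hg hf]
  congr with w
  have h𝓕 := fourier_gaussian_innerProductSpace' hre 0 w
  simp only [inner_zero_left, Complex.ofReal_zero, mul_zero, add_zero, ← Complex.ofReal_inv] at h𝓕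
  rw [h𝓕]
  congr 2
  · simp
  · congr 1
    simp
    ring

end Fourier

section Plancherel

variable {V H : Type*} [NormedAddCommGroup V] [InnerProductSpace ℝ V] [MeasurableSpace V]
  [BorelSpace V] [FiniteDimensional ℝ V] [NormedAddCommGroup H] [InnerProductSpace ℂ H]
  [CompleteSpace H]

theorem memLp_two_fourier {f : V → H} (hf : Integrable f) (hf' : MemLp f 2) :
    MemLp (𝓕 f) 2 := by
  let g : Lp H 2 (volume : Measure V) := 𝓕 (hf'.toLp f)
  refine (memLp_congr_ae ?_).1 (Lp.memLp g)
  refine ae_eq_of_forall_integral_schwartz_smul_eq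
    ((Lp.memLp g).locallyIntegrable one_le_two) (continuous_fourier hf).locallyIntegrable
    fun φ => ?_
  calc ∫ x, φ x • g x = ∫ x, (𝓕 φ) x • hf'.toLp f x := by
        have h := DFunLike.congr_fun (Lp.fourier_toTemperedDistribution_eq (hf'.toLp f)) φ
        rw [TemperedDistribution.fourier_apply] at h
        simpa only [Lp.toTemperedDistribution_apply] using h.symm
    _ = ∫ x, (𝓕 φ) x • f x := by
        refine integral_congr_ae ?_
        filter_upwards [hf'.coeFn_toLp] with x hx
        rw [hx]
    _ = ∫ x, φ x • 𝓕 f x := by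
        rw [SchwartzMap.fourier_coe, integral_fourier_smul_eq φ.integrable hf]

end Plancherel

section SigmaFinite

variable {α : Type*} [MeasurableSpace α] {μ : Measure α} [SigmaFinite μ] {f : α → ℝ} {B : ℝ}

theorem aecover_spanningSets : AECover μ atTop (spanningSets μ) where
  ae_eventually_mem := .of_forall fun x => eventually_mem_spanningSets μ x
  measurableSet := measurableSet_spanningSets μ

theorem integrable_of_forall_setIntegral_le (h0 : 0 ≤ᵐ[μ] f)
    (hi : ∀ s, MeasurableSet s → μ s < ⊤ → IntegrableOn f s μ)
    (hB : ∀ s, MeasurableSet s → μ s < ⊤ → ∫ x in s, f x ∂μ ≤ B) : Integrable f μ :=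
  aecover_spanningSets.integrable_of_integral_bounded_of_nonneg_ae B
    (fun n => hi _ (measurableSet_spanningSets μ n) (measure_spanningSets_lt_top μ n)) h0
    (.of_forall fun n => hB _ (measurableSet_spanningSets μ n) (measure_spanningSets_lt_top μ n))

theorem integral_le_of_forall_setIntegral_le (hf : Integrable f μ)
    (hB : ∀ s, MeasurableSet s → μ s < ⊤ → ∫ x in s, f x ∂μ ≤ B) : ∫ x, f x ∂μ ≤ B :=
  le_of_tendsto' (aecover_spanningSets.integral_tendsto_of_countably_generated hf) fun n =>
    hB _ (measurableSet_spanningSets μ n) (measure_spanningSets_lt_top μ n)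

end SigmaFinite

section WeakConvergence

theorem exists_subseq_tendsto_inner {𝕜 H : Type*} [RCLike 𝕜] [NormedAddCommGroup H]
    [InnerProductSpace 𝕜 H] [CompleteSpace H] [TopologicalSpace.SeparableSpace H] {x : ℕ → H}
    {R : ℝ} (hx : ∀ n, ‖x n‖ ≤ R) :
    ∃ y, ∃ σ : ℕ → ℕ, StrictMono σ ∧
      ∀ z, Tendsto (fun n => inner 𝕜 (x (σ n)) z) atTop (𝓝 (inner 𝕜 y z)) := by
  let ℓ : ℕ → WeakDual 𝕜 H := fun n => (InnerProductSpace.toDual 𝕜 H (x n)).toWeakDual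
  have hℓ : ∀ n, ℓ n ∈ WeakDual.toStrongDual ⁻¹' Metric.closedBall 0 R := fun n => by
    simpa [ℓ] using hx n
  obtain ⟨l, -, σ, hσ, hl⟩ := WeakDual.isSeqCompact_closedBall 𝕜 H 0 R hℓ
  refine ⟨(InnerProductSpace.toDual 𝕜 H).symm l.toStrongDual, σ, hσ, fun z => ?_⟩
  simpa [ℓ] using! ((WeakDual.eval_continuous z).tendsto l).comp hl

variable {α : Type*} [MeasurableSpace α] {μ : Measure α} {F : ℕ → α → ℝ} {u : α → ℝ}

/-- Weak convergence `F n ⇀ u` in `L²(μ)`, stated for functions rather than for their classes in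
`Lp ℝ 2 μ`. Membership of `F n` and `u` in `L²` is not part of the definition. -/
def TendstoWeaklyL2 (F : ℕ → α → ℝ) (u : α → ℝ) (μ : Measure α) : Prop :=
  ∀ φ : α → ℝ, MemLp φ 2 μ → Tendsto (fun n => ∫ x, φ x * F n x ∂μ) atTop (𝓝 (∫ x, φ x * u x ∂μ))

theorem exists_subseq_tendstoWeaklyL2 [IsSeparable μ] {R : ℝ} (hF : ∀ n, MemLp (F n) 2 μ)
    (hR : ∀ n, ∫ x, F n x ^ 2 ∂μ ≤ R) :
    ∃ u, MemLp u 2 μ ∧ ∃ σ : ℕ → ℕ, StrictMono σ ∧ TendstoWeaklyL2 (fun n => F (σ n)) u μ := by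
  have inner_toLp : ∀ {f g : α → ℝ} (hf : MemLp f 2 μ) (hg : MemLp g 2 μ),
      inner ℝ (hf.toLp f) (hg.toLp g) = ∫ x, g x * f x ∂μ := fun hf hg => by
    rw [L2.inner_def]
    refine integral_congr_ae ?_
    filter_upwards [hf.coeFn_toLp, hg.coeFn_toLp] with x hfx hgx
    rw [hfx, hgx, RCLike.inner_apply, conj_trivial]
  have hbdd : ∀ n, ‖(hF n).toLp (F n)‖ ≤ √R := fun n => by
    refine Real.le_sqrt_of_sq_le ?_
    simpa only [← real_inner_self_eq_norm_sq, inner_toLp, ← sq] using hR n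
  have : Fact ((2 : ℝ≥0∞) ≠ ⊤) := ⟨ENNReal.ofNat_ne_top⟩
  obtain ⟨v, σ, hσ, hv⟩ := exists_subseq_tendsto_inner (𝕜 := ℝ) hbdd
  refine ⟨v, Lp.memLp v, σ, hσ, fun φ hφ => ?_⟩
  have h := hv (hφ.toLp φ)
  rw [← Lp.toLp_coeFn v (Lp.memLp v)] at h
  simpa only [inner_toLp] using h

theorem TendstoWeaklyL2.abs_integral_mul_le {B : ℝ} (h : TendstoWeaklyL2 F u μ)
    (hF : ∀ n, Integrable (F n) μ) (hB : ∀ n, ∫ x, |F n x| ∂μ ≤ B) {φ : α → ℝ} (hφ : MemLp φ 2 μ)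
    (hφ1 : ∀ x, |φ x| ≤ 1) : |∫ x, φ x * u x ∂μ| ≤ B := by
  refine le_of_tendsto' (h φ hφ).abs fun n => ?_
  calc |∫ x, φ x * F n x ∂μ| ≤ ∫ x, |φ x * F n x| ∂μ := abs_integral_le_integral_abs
    _ ≤ ∫ x, |F n x| ∂μ := by
        refine integral_mono_of_nonneg (.of_forall fun x => abs_nonneg _) (hF n).abs
          (.of_forall fun x => ?_)
        simpa only [abs_mul] using mul_le_of_le_one_left (abs_nonneg _) (hφ1 x)
    _ ≤ B := hB n

theorem TendstoWeaklyL2.setIntegral_abs_le {B : ℝ} (h : TendstoWeaklyL2 F u μ)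
    (hF : ∀ n, Integrable (F n) μ) (hB : ∀ n, ∫ x, |F n x| ∂μ ≤ B)
    (hu : AEStronglyMeasurable u μ) {s : Set α} (hs : MeasurableSet s) (hμs : μ s < ⊤) :
    ∫ x in s, |u x| ∂μ ≤ B := by
  let φ : α → ℝ := s.indicator fun x => u x / |u x|
  have hφ1 : ∀ x, |φ x| ≤ s.indicator 1 x := fun x => by
    by_cases hx : x ∈ s <;> simp [φ, hx, abs_div, div_self_le_one]
  have hφm : AEStronglyMeasurable φ μ :=
    (hu.aemeasurable.div hu.norm.aemeasurable).aestronglyMeasurable.indicator hs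
  have hφ : MemLp φ 2 μ :=
    (memLp_indicator_const 2 hs (1 : ℝ) (.inr hμs.ne)).mono' hφm (.of_forall hφ1)
  have hsign : ∀ x, u x / |u x| * u x = |u x| := fun x => by
    rw [div_mul_eq_mul_div, ← abs_mul_abs_self, mul_self_div_self]
  have hφu : ∀ x, φ x * u x = s.indicator (fun x => |u x|) x := fun x => by
    rw [← Set.indicator_mul_left]
    simp only [hsign]
  rw [← integral_indicator hs, ← integral_congr_ae (.of_forall hφu)]
  exact (le_abs_self _).trans <| h.abs_integral_mul_le hF hB hφ fun x =>
    (hφ1 x).trans (Set.indicator_le_self' (fun _ _ => zero_le_one) x)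

theorem TendstoWeaklyL2.integrable [SigmaFinite μ] {B : ℝ} (h : TendstoWeaklyL2 F u μ)
    (hF : ∀ n, Integrable (F n) μ) (hB : ∀ n, ∫ x, |F n x| ∂μ ≤ B) (hu : MemLp u 2 μ) :
    Integrable u μ := by
  refine (integrable_norm_iff hu.1).1 (integrable_of_forall_setIntegral_le
    (.of_forall fun x => norm_nonneg _) (fun s _ hμs => ?_) fun s hs hμs =>
      h.setIntegral_abs_le hF hB hu.1 hs hμs)
  have : IsFiniteMeasure (μ.restrict s) := isFiniteMeasure_restrict.2 hμs.ne
  exact ((hu.restrict s).integrable one_le_two).norm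

theorem TendstoWeaklyL2.integral_abs_le [SigmaFinite μ] {B : ℝ} (h : TendstoWeaklyL2 F u μ)
    (hF : ∀ n, Integrable (F n) μ) (hB : ∀ n, ∫ x, |F n x| ∂μ ≤ B) (hu : Integrable u μ) :
    ∫ x, |u x| ∂μ ≤ B :=
  integral_le_of_forall_setIntegral_le hu.abs fun _ hs hμs =>
    h.setIntegral_abs_le hF hB hu.1 hs hμs

end WeakConvergence

theorem integrable_of_tendsto_ae_of_integral_norm_le {α E : Type*} [MeasurableSpace α]
    {μ : Measure α} [NormedAddCommGroup E] {f : ℕ → α → E} {g : α → E} {B : ℝ}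
    (hf : ∀ n, Integrable (f n) μ) (hB : ∀ n, ∫ x, ‖f n x‖ ∂μ ≤ B)
    (h : ∀ᵐ x ∂μ, Tendsto (fun n => f n x) atTop (𝓝 (g x))) : Integrable g μ := by
  refine ⟨aestronglyMeasurable_of_tendsto_ae _ (fun n => (hf n).1) h, ?_⟩
  calc ∫⁻ x, ‖g x‖ₑ ∂μ = ∫⁻ x, liminf (fun n => ‖f n x‖ₑ) atTop ∂μ :=
        lintegral_congr_ae (h.mono fun x hx => hx.enorm.liminf_eq.symm)
    _ ≤ liminf (fun n => ∫⁻ x, ‖f n x‖ₑ ∂μ) atTop :=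
        lintegral_liminf_le' fun n => (hf n).1.enorm
    _ ≤ liminf (fun _ : ℕ => ENNReal.ofReal B) atTop := by
        refine liminf_le_liminf (.of_forall fun n => ?_)
        rw [← ofReal_integral_norm_eq_lintegral_enorm (hf n)]
        exact ENNReal.ofReal_le_ofReal (hB n)
    _ < ⊤ := by simp only [liminf_const, ENNReal.ofReal_lt_top]

theorem norm_exp_neg_mul_sq_le_one {c : ℝ} (hc : 0 ≤ c) (t : ℝ) :
    ‖Real.exp (-c * t ^ 2)‖ ≤ 1 := by
  rw [Real.norm_of_nonneg (Real.exp_nonneg _), Real.exp_le_one_iff, neg_mul, neg_nonpos]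
  positivity

theorem integrable_of_integral_mul_gaussian_le {h : ℝ → ℝ} {B : ℝ} (h0 : ∀ t, 0 ≤ h t)
    (hi : ∀ n : ℕ, Integrable fun t => h t * Real.exp (-((n : ℝ) + 1)⁻¹ * t ^ 2))
    (hB : ∀ n : ℕ, ∫ t, h t * Real.exp (-((n : ℝ) + 1)⁻¹ * t ^ 2) ≤ B) : Integrable h := by
  refine integrable_of_tendsto_ae_of_integral_norm_le (B := B) hi (fun n => ?_)
    (.of_forall fun t => ?_)
  · simpa only [norm_mul, Real.norm_of_nonneg (h0 _), Real.norm_of_nonneg (Real.exp_nonneg _)]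
      using hB n
  · have hn : Tendsto (fun n : ℕ => ((n : ℝ) + 1)⁻¹) atTop (𝓝 0) :=
      (tendsto_atTop_add_const_right _ 1 tendsto_natCast_atTop_atTop).inv_tendsto_atTop
    simpa using! ((hn.neg.mul_const (t ^ 2)).rexp).const_mul (h t)

section FTr

variable {F G : ℝ → ℝ}

theorem continuous_FTr (hF : Integrable F) : Continuous (FTr F) :=
  Complex.continuous_re.comp (continuous_fourier hF.ofReal)

theorem norm_fourier_ofReal_le (F : ℝ → ℝ) (t : ℝ) :
    ‖𝓕 (fun x => (F x : ℂ)) t‖ ≤ ∫ x, |F x| := by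
  simpa using! VectorFourier.norm_fourierIntegral_le_integral_norm 𝐞 volume (innerₗ ℝ)
    (fun x => (F x : ℂ)) t

theorem abs_FTr_le (F : ℝ → ℝ) (t : ℝ) : |FTr F t| ≤ ∫ x, |F x| :=
  (Complex.abs_re_le_norm _).trans (norm_fourier_ofReal_le F t)

theorem FTr_zero (F : ℝ → ℝ) : FTr F 0 = ∫ x, F x := by
  simp [FTr, Real.fourier_real_eq, integral_complex_ofReal]

theorem FTr_congr_ae (h : F =ᵐ[volume] G) : FTr F = FTr G := by
  ext t
  simp only [FTr, Real.fourier_real_eq]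
  congr 1
  refine integral_congr_ae ?_
  filter_upwards [h] with x hx
  rw [hx]

theorem FTr_add (hF : Integrable F) (hG : Integrable G) (t : ℝ) :
    FTr (fun x => F x + G x) t = FTr F t + FTr G t := by
  have h := VectorFourier.fourierIntegral_add Real.continuous_fourierChar (L := innerₗ ℝ)
    continuous_inner hF.ofReal (𝕜 := ℝ) (hG.ofReal (𝕜 := ℂ))
  simpa [FTr] using! congrArg Complex.re (congrFun h t)

theorem FTr_const_mul (c : ℝ) (F : ℝ → ℝ) (t : ℝ) : FTr (fun x => c * F x) t = c * FTr F t := by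
  simp only [FTr, Real.fourier_real_eq_integral_exp_smul, smul_eq_mul, Complex.ofReal_mul]
  rw [← Complex.re_ofReal_mul, ← integral_const_mul]
  congr 2 with x
  ring

theorem fourier_ofReal_neg (F : ℝ → ℝ) (t : ℝ) :
    𝓕 (fun x => (F x : ℂ)) (-t) = conj (𝓕 (fun x => (F x : ℂ)) t) := by
  rw [Real.fourier_real_eq_integral_exp_smul, Real.fourier_real_eq_integral_exp_smul,
    ← integral_conj]
  congr with x
  simp [← Complex.exp_conj, Complex.conj_ofNat]

theorem FTr_neg (F : ℝ → ℝ) (t : ℝ) : FTr F (-t) = FTr F t := by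
  rw [FTr, fourier_ofReal_neg, Complex.conj_re, FTr]

theorem FTr_comp_neg (F : ℝ → ℝ) : FTr (fun x => F (-x)) = FTr F := by
  ext t
  have h := congrFun (Real.fourierInv_eq_fourier_comp_neg fun x => (F x : ℂ)) t
  rw [Real.fourierInv_eq_fourier_neg] at h
  rw [FTr, ← h, ← FTr_neg F t, FTr]

theorem ofReal_FTr (hF : Function.Even F) (t : ℝ) :
    (FTr F t : ℂ) = 𝓕 (fun x => (F x : ℂ)) t := by
  refine Complex.conj_eq_iff_re.1 ?_
  rw [← fourier_ofReal_neg, ← Real.fourierInv_eq_fourier_neg,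
    Real.fourierInv_eq_fourier_comp_neg]
  simp only [hF _]

theorem integral_FTr_mul_eq_re (hF : Integrable F) (hG : Integrable G) :
    ∫ x, FTr F x * G x = (∫ x, 𝓕 (fun x => (F x : ℂ)) x * G x).re := by
  have hFG : Integrable fun x => 𝓕 (fun x => (F x : ℂ)) x * G x :=
    hG.ofReal.bdd_mul (continuous_fourier hF.ofReal).aestronglyMeasurable
      (.of_forall (norm_fourier_ofReal_le F))
  simpa only [FTr, Complex.re_mul_ofReal, RCLike.re_to_complex] using integral_re hFG

theorem integral_FTr_mul (hF : Integrable F) (hG : Integrable G) :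
    ∫ x, FTr F x * G x = ∫ x, F x * FTr G x := by
  simp only [mul_comm (F _)]
  rw [integral_FTr_mul_eq_re hF hG, integral_FTr_mul_eq_re hG hF]
  simpa only [smul_eq_mul, mul_comm] using!
    congrArg Complex.re (integral_fourier_smul_eq hF.ofReal (hG.ofReal (𝕜 := ℂ)))

theorem memLp_two_FTr (hF : Integrable F) (hF' : MemLp F 2) : MemLp (FTr F) 2 :=
  MemLp.re (memLp_two_fourier hF.ofReal (hF'.ofReal (K := ℂ)))

theorem FTr_FTr_ae_eq (hF : Function.Even F) (hi : Integrable F) (hi' : Integrable (FTr F)) :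
    FTr (FTr F) =ᵐ[volume] F := by
  have h𝓕 : (fun t => (FTr F t : ℂ)) = 𝓕 (fun x => (F x : ℂ)) := funext (ofReal_FTr hF)
  filter_upwards [fourierInv_fourier_ae_eq hi.ofReal (h𝓕 ▸ hi'.ofReal)] with x hx
  rw [← FTr_neg, FTr, h𝓕, ← Real.fourierInv_eq_fourier_neg, hx, Complex.ofReal_re]

theorem FTr_FTr (hF : Function.Even F) (hc : Continuous F) (hi : Integrable F)
    (hi' : Integrable (FTr F)) : FTr (FTr F) = F :=
  (continuous_FTr hi').ae_eq_iff_eq volume hc |>.1 (FTr_FTr_ae_eq hF hi hi')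

theorem tendsto_integral_FTr_mul_gaussian (hF : Integrable F) (hc : ContinuousAt F 0) :
    Tendsto (fun c : ℝ => ∫ t, FTr F t * Real.exp (-c⁻¹ * t ^ 2)) atTop (𝓝 (F 0)) := by
  have h := tendsto_integral_gaussian_smul_fourier (hF.ofReal (𝕜 := ℂ))
    (Complex.continuous_ofReal.continuousAt.comp hc)
  refine ((Complex.continuous_re.tendsto _).comp h).congr' ?_
  filter_upwards [Ioi_mem_atTop 0] with c (hc : 0 < c)
  rw [integral_FTr_mul_eq_re hF (integrable_exp_neg_mul_sq (inv_pos.2 hc))]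
  simp [mul_comm, ← Complex.ofReal_pow]

-- `∫ (k - FTr F) e` stays bounded along Gaussians `e` increasing to `1`, since `∫ FTr F * e` tends
-- to `F 0`; Fatou's lemma then gives integrability of `k - FTr F`.
theorem integrable_FTr_of_le {k : ℝ → ℝ} (hF : Integrable F) (hc : ContinuousAt F 0)
    (hk : Integrable k) (hle : ∀ t, FTr F t ≤ k t) : Integrable (FTr F) := by
  let e : ℕ → ℝ → ℝ := fun n t => Real.exp (-((n : ℝ) + 1)⁻¹ * t ^ 2)
  have he : ∀ n, Integrable (e n) := fun n => integrable_exp_neg_mul_sq (by positivity)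
  have hke : ∀ n, Integrable fun t => k t * e n t := fun n =>
    hk.mul_bdd (he n).1 (.of_forall fun t => norm_exp_neg_mul_sq_le_one (by positivity) t)
  have hFe : ∀ n, Integrable fun t => FTr F t * e n t := fun n =>
    (he n).bdd_mul (continuous_FTr hF).aestronglyMeasurable (.of_forall (abs_FTr_le F))
  obtain ⟨L, hL⟩ := ((tendsto_integral_FTr_mul_gaussian hF hc).comp
    (tendsto_atTop_add_const_right _ 1 tendsto_natCast_atTop_atTop)).bddBelow_range
  have hkF : Integrable fun t => k t - FTr F t := by
    refine integrable_of_integral_mul_gaussian_le (B := (∫ t, |k t|) - L)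
      (fun t => sub_nonneg.2 (hle t)) (fun n => ?_) (fun n => ?_)
    · simp only [sub_mul]
      exact (hke n).sub (hFe n)
    · simp only [sub_mul]
      rw [integral_sub (hke n) (hFe n)]
      refine sub_le_sub (integral_mono (hke n) hk.abs fun t => (le_abs_self _).trans ?_)
        (hL ⟨n, rfl⟩)
      rw [abs_mul]
      exact mul_le_of_le_one_right (abs_nonneg _) (norm_exp_neg_mul_sq_le_one (by positivity) t)
  exact (hk.sub hkF).congr (.of_forall fun t => sub_sub_cancel _ _)

/-- The even part of a real function, used to symmetrise weak limits. -/
noncomputable def evenPart (F : ℝ → ℝ) (x : ℝ) : ℝ := 2⁻¹ * (F x + F (-x))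

theorem even_evenPart (F : ℝ → ℝ) : Function.Even (evenPart F) := fun x => by
  rw [evenPart, evenPart, neg_neg, add_comm]

theorem integrable_evenPart (hF : Integrable F) : Integrable (evenPart F) :=
  (hF.add hF.comp_neg).const_mul _

theorem FTr_evenPart (hF : Integrable F) : FTr (evenPart F) = FTr F := by
  ext t
  unfold evenPart
  rw [FTr_const_mul, FTr_add hF hF.comp_neg, FTr_comp_neg]
  ring

theorem integral_abs_evenPart_le (hF : Integrable F) : ∫ x, |evenPart F x| ≤ ∫ x, |F x| := by
  calc ∫ x, |evenPart F x| ≤ ∫ x, 2⁻¹ * (|F x| + |F (-x)|) := by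
        refine integral_mono (integrable_evenPart hF).abs
          ((hF.abs.add hF.comp_neg.abs).const_mul _) fun x => ?_
        simp only [evenPart, abs_mul, abs_inv, Nat.abs_ofNat]
        gcongr
        exact abs_add_le _ _
    _ = ∫ x, |F x| := by
        rw [integral_const_mul, integral_add hF.abs hF.comp_neg.abs,
          integral_neg_eq_self fun x => |F x|]
        ring

theorem integrableOn_FTr (hF : Integrable F) {s : Set ℝ} (hs : volume s < ⊤) :
    IntegrableOn (FTr F) s :=
  Measure.integrableOn_of_bounded hs.ne (continuous_FTr hF).aestronglyMeasurable
    (.of_forall (abs_FTr_le F))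

end FTr

section WeakLimit

variable {F : ℕ → ℝ → ℝ} {u : ℝ → ℝ}

theorem TendstoWeaklyL2.tendsto_setIntegral_FTr (h : TendstoWeaklyL2 F u volume)
    (hF : ∀ n, Integrable (F n)) (hu : Integrable u) {s : Set ℝ} (hs : MeasurableSet s)
    (hμs : volume s < ⊤) :
    Tendsto (fun n => ∫ t in s, FTr (F n) t) atTop (𝓝 (∫ t in s, FTr u t)) := by
  let χ : ℝ → ℝ := s.indicator 1
  have hχ : ∀ p, MemLp χ p := fun p => memLp_indicator_const p hs 1 (.inr hμs.ne)
  have hχi : Integrable χ := memLp_one_iff_integrable.1 (hχ 1)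
  have integral_FTr_χ_mul : ∀ {G : ℝ → ℝ}, Integrable G →
      ∫ x, FTr χ x * G x = ∫ t in s, FTr G t := fun {G} hG => by
    rw [integral_FTr_mul hχi hG, ← integral_indicator hs]
    simp only [χ, ← Set.indicator_mul_left, Pi.one_apply, one_mul]
  simpa only [integral_FTr_χ_mul, hF, hu] using h (FTr χ) (memLp_two_FTr hχi (hχ 2))

variable {k : ℝ → ℝ}

theorem TendstoWeaklyL2.FTr_ae_le (h : TendstoWeaklyL2 F u volume)
    (hF : ∀ n, Integrable (F n)) (hu : Integrable u) (hk : Integrable k)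
    (hle : ∀ n t, FTr (F n) t ≤ k t) : FTr u ≤ᵐ[volume] k := by
  have h0 : 0 ≤ᵐ[volume] fun t => k t - FTr u t := by
    refine ae_nonneg_of_forall_setIntegral_nonneg_of_sigmaFinite
      (fun s _ hμs => hk.integrableOn.sub (integrableOn_FTr hu hμs)) fun s hs hμs => ?_
    rw [integral_sub hk.integrableOn (integrableOn_FTr hu hμs), sub_nonneg]
    exact le_of_tendsto' (h.tendsto_setIntegral_FTr hF hu hs hμs) fun n =>
      integral_mono (integrableOn_FTr (hF n) hμs) hk.integrableOn (hle n)
  exact h0.mono fun t => sub_nonneg.1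

variable {c : ℝ}

theorem TendstoWeaklyL2.setIntegral_sub_FTr_le (h : TendstoWeaklyL2 F u volume)
    (hF : ∀ n, Integrable (F n)) (hu : Integrable u) (hk : Integrable k)
    (hle : ∀ n t, FTr (F n) t ≤ k t) (hi : ∀ n, Integrable (FTr (F n)))
    (hc : Tendsto (fun n => ∫ t, FTr (F n) t) atTop (𝓝 c)) {s : Set ℝ} (hs : MeasurableSet s)
    (hμs : volume s < ⊤) : ∫ t in s, (k t - FTr u t) ≤ (∫ t, k t) - c := by
  rw [integral_sub hk.integrableOn (integrableOn_FTr hu hμs)]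
  refine le_of_tendsto_of_tendsto'
    ((h.tendsto_setIntegral_FTr hF hu hs hμs).const_sub (∫ t in s, k t))
    (hc.const_sub (∫ t, k t)) fun n => ?_
  rw [← integral_sub hk.integrableOn (hi n).integrableOn, ← integral_sub hk (hi n)]
  exact setIntegral_le_integral (hk.sub (hi n)) (.of_forall fun t => sub_nonneg.2 (hle n t))

theorem TendstoWeaklyL2.integrable_FTr (h : TendstoWeaklyL2 F u volume)
    (hF : ∀ n, Integrable (F n)) (hu : Integrable u) (hk : Integrable k)
    (hle : ∀ n t, FTr (F n) t ≤ k t) (hi : ∀ n, Integrable (FTr (F n)))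
    (hc : Tendsto (fun n => ∫ t, FTr (F n) t) atTop (𝓝 c)) : Integrable (FTr u) := by
  have hku : Integrable fun t => k t - FTr u t :=
    integrable_of_forall_setIntegral_le
      ((h.FTr_ae_le hF hu hk hle).mono fun t => sub_nonneg.2)
      (fun s _ hμs => hk.integrableOn.sub (integrableOn_FTr hu hμs))
      fun s hs hμs => h.setIntegral_sub_FTr_le hF hu hk hle hi hc hs hμs
  exact (hk.sub hku).congr (.of_forall fun t => sub_sub_cancel _ _)

theorem TendstoWeaklyL2.le_integral_FTr (h : TendstoWeaklyL2 F u volume)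
    (hF : ∀ n, Integrable (F n)) (hu : Integrable u) (hk : Integrable k)
    (hle : ∀ n t, FTr (F n) t ≤ k t) (hi : ∀ n, Integrable (FTr (F n)))
    (hc : Tendsto (fun n => ∫ t, FTr (F n) t) atTop (𝓝 c)) : c ≤ ∫ t, FTr u t := by
  have hui := h.integrable_FTr hF hu hk hle hi hc
  have hB := integral_le_of_forall_setIntegral_le (hk.sub hui) fun s hs hμs =>
    h.setIntegral_sub_FTr_le hF hu hk hle hi hc hs hμs
  simpa only [Pi.sub_apply, integral_sub hk hui, sub_le_sub_iff_left] using hB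

end WeakLimit

theorem le_of_ae_restrict_le {X Y : Type*} [TopologicalSpace X] [MeasurableSpace X]
    {μ : Measure X} [μ.IsOpenPosMeasure] [TopologicalSpace Y] [LinearOrder Y]
    [OrderClosedTopology Y] {f g : X → Y} {s : Set X} (h : f ≤ᵐ[μ.restrict s] g)
    (hf : ContinuousOn f s) (hg : ContinuousOn g s) (hs : s ⊆ closure (interior s)) :
    ∀ x ∈ s, f x ≤ g x := fun _ hx =>
  max_eq_right_iff.1 <| Measure.eqOn_of_ae_eq (f := fun x => max (f x) (g x))
    (h.mono fun _ => max_eq_right) (hf.sup hg) hg hs hx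

theorem integrable_indicator_Ioo (N : ℝ) :
    Integrable ((Set.Ioo (-1 : ℝ) 1).indicator fun _ => N) :=
  (integrable_indicator_iff measurableSet_Ioo).2 (integrableOn_const (by simp))

theorem integral_indicator_Ioo (N : ℝ) :
    ∫ t, (Set.Ioo (-1 : ℝ) 1).indicator (fun _ => N) t = 2 * N := by
  rw [integral_indicator_const N measurableSet_Ioo, Real.volume_real_Ioo_of_le (by norm_num),
    smul_eq_mul]
  norm_num

/-- The class `ℰ⁺` together with the zero function. -/
structure Admissible (F : ℝ → ℝ) : Prop where
  continuous : Continuous F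
  integrable : Integrable F
  even : Function.Even F
  nonpos : ∀ t : ℝ, 1 ≤ |t| → FTr F t ≤ 0

namespace Admissible

variable {F : ℝ → ℝ}

theorem const_mul (hF : Admissible F) {c : ℝ} (hc : 0 ≤ c) : Admissible fun x => c * F x where
  continuous := hF.continuous.const_mul c
  integrable := hF.integrable.const_mul c
  even x := by simp only [hF.even x]
  nonpos t ht := by
    rw [FTr_const_mul]
    exact mul_nonpos_of_nonneg_of_nonpos hc (hF.nonpos t ht)

theorem FTr_le_indicator {N : ℝ} (hF : Admissible F) (hN : ∫ x, |F x| ≤ N) (t : ℝ) :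
    FTr F t ≤ (Set.Ioo (-1 : ℝ) 1).indicator (fun _ => N) t := by
  by_cases ht : t ∈ Set.Ioo (-1 : ℝ) 1
  · rw [Set.indicator_of_mem ht]
    exact (le_abs_self _).trans ((abs_FTr_le F t).trans hN)
  · rw [Set.indicator_of_notMem ht]
    exact hF.nonpos t (not_lt.1 fun h => ht (abs_lt.1 h))

theorem integrable_FTr (hF : Admissible F) : Integrable (FTr F) :=
  integrable_FTr_of_le hF.integrable hF.continuous.continuousAt (integrable_indicator_Ioo _)
    (hF.FTr_le_indicator le_rfl)

theorem FTr_FTr (hF : Admissible F) : FTr (FTr F) = F :=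
  _root_.FTr_FTr hF.even hF.continuous hF.integrable hF.integrable_FTr

theorem integral_FTr (hF : Admissible F) : ∫ t, FTr F t = F 0 := by
  rw [← FTr_zero, hF.FTr_FTr]

theorem apply_zero_le (hF : Admissible F) : F 0 ≤ 2 * ∫ x, |F x| := by
  rw [← hF.integral_FTr, ← integral_indicator_Ioo]
  exact integral_mono hF.integrable_FTr (integrable_indicator_Ioo _) (hF.FTr_le_indicator le_rfl)

theorem integral_abs_FTr_le {N : ℝ} (hF : Admissible F) (hN : ∫ x, |F x| ≤ N) :
    ∫ t, |FTr F t| ≤ 4 * N - F 0 := by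
  let χ : ℝ → ℝ := (Set.Ioo (-1 : ℝ) 1).indicator fun _ => N
  have hχ : Integrable χ := integrable_indicator_Ioo N
  have hN0 : 0 ≤ N := (integral_nonneg fun x => abs_nonneg (F x)).trans hN
  calc ∫ t, |FTr F t| ≤ ∫ t, (2 * χ t - FTr F t) := by
        refine integral_mono hF.integrable_FTr.abs ((hχ.const_mul 2).sub hF.integrable_FTr)
          fun t => abs_le'.2 ?_
        have hχ0 : 0 ≤ χ t := Set.indicator_nonneg (fun _ _ => hN0) t
        constructor <;> linarith [hF.FTr_le_indicator hN t]
    _ = 4 * N - F 0 := by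
        rw [integral_sub (hχ.const_mul 2) hF.integrable_FTr, integral_const_mul,
          integral_indicator_Ioo, hF.integral_FTr]
        ring

theorem abs_apply_le {N : ℝ} (hF : Admissible F) (hN : ∫ x, |F x| ≤ N) (x : ℝ) :
    |F x| ≤ 4 * N - F 0 := by
  calc |F x| = |FTr (FTr F) x| := by rw [hF.FTr_FTr]
    _ ≤ ∫ t, |FTr F t| := abs_FTr_le _ x
    _ ≤ 4 * N - F 0 := hF.integral_abs_FTr_le hN

end Admissible

theorem sq_le_mul_abs {a M : ℝ} (h : |a| ≤ M) : a ^ 2 ≤ M * |a| := by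
  rw [← sq_abs, sq]
  exact mul_le_mul_of_nonneg_right h (abs_nonneg a)

theorem integrable_sq_of_abs_le {α : Type*} [MeasurableSpace α] {μ : Measure α} {f : α → ℝ} {M : ℝ}
    (hf : Integrable f μ) (hM : ∀ x, |f x| ≤ M) : Integrable (fun x => f x ^ 2) μ :=
  (hf.abs.const_mul M).mono' (hf.1.pow 2) (.of_forall fun x => by
    rw [Real.norm_of_nonneg (sq_nonneg _)]
    exact sq_le_mul_abs (hM x))

theorem integral_sq_le_of_abs_le {α : Type*} [MeasurableSpace α] {μ : Measure α} {f : α → ℝ}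
    {M : ℝ} (hf : Integrable f μ) (hM : ∀ x, |f x| ≤ M) :
    ∫ x, f x ^ 2 ∂μ ≤ M * ∫ x, |f x| ∂μ := by
  rw [← integral_const_mul]
  exact integral_mono (integrable_sq_of_abs_le hf hM) (hf.abs.const_mul M) fun x =>
    sq_le_mul_abs (hM x)

theorem exists_admissible_of_integrable_FTr {u : ℝ → ℝ} (hu : Integrable u)
    (hi : Integrable (FTr u)) (h0 : ∀ t : ℝ, 1 ≤ |t| → FTr u t ≤ 0) :
    ∃ G, Admissible G ∧ G 0 = ∫ t, FTr u t ∧ ∫ x, |G x| ≤ ∫ x, |u x| := by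
  have hE := FTr_evenPart hu
  have hG : FTr (FTr u) =ᵐ[volume] evenPart u := by
    rw [← hE]
    exact FTr_FTr_ae_eq (even_evenPart u) (integrable_evenPart hu) (hE ▸ hi)
  have hGE : FTr (FTr (FTr u)) = FTr u := (FTr_congr_ae hG).trans hE
  refine ⟨FTr (FTr u), ⟨continuous_FTr hi, (integrable_congr hG).2 (integrable_evenPart hu),
    FTr_neg _, fun t ht => ?_⟩, FTr_zero _, ?_⟩
  · rw [hGE]
    exact h0 t ht
  · rw [integral_congr_ae (hG.mono fun x hx => congrArg abs hx)]
    exact integral_abs_evenPart_le hu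

theorem FTr_nonpos_of_ae_le_indicator {u : ℝ → ℝ} (hu : Integrable u) {N : ℝ}
    (h : FTr u ≤ᵐ[volume] (Set.Ioo (-1 : ℝ) 1).indicator fun _ => N) :
    ∀ t : ℝ, 1 ≤ |t| → FTr u t ≤ 0 := by
  have hreg : (Set.Ioo (-1 : ℝ) 1)ᶜ ⊆ closure (interior (Set.Ioo (-1 : ℝ) 1)ᶜ) := by
    rw [interior_compl, closure_Ioo (by norm_num), closure_compl, interior_Icc]
  have hs : ∀ᵐ t ∂volume.restrict (Set.Ioo (-1 : ℝ) 1)ᶜ, FTr u t ≤ 0 := by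
    refine (ae_restrict_iff' measurableSet_Ioo.compl).2 (h.mono fun t ht hts => ?_)
    simpa only [Set.indicator_of_notMem hts] using ht
  exact fun t ht => le_of_ae_restrict_le hs (continuous_FTr hu).continuousOn continuousOn_const hreg
    t fun h => ht.not_gt (abs_lt.2 h)

theorem exists_admissible_of_tendsto {F : ℕ → ℝ → ℝ} {c : ℝ} (hF : ∀ n, Admissible (F n))
    (hN : ∀ n, ∫ x, |F n x| ≤ 1) (hc : Tendsto (fun n => F n 0) atTop (𝓝 c)) :
    ∃ G, Admissible G ∧ ∫ x, |G x| ≤ 1 ∧ c ≤ G 0 := by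
  obtain ⟨b, hb⟩ := hc.bddBelow_range
  have hM : ∀ n x, |F n x| ≤ 4 - b := fun n x => by
    linarith [(hF n).abs_apply_le (hN n) x, hb ⟨n, rfl⟩]
  have hFi : ∀ n, Integrable (F n) := fun n => (hF n).integrable
  have hL2 : ∀ n, MemLp (F n) 2 := fun n =>
    (memLp_two_iff_integrable_sq (hFi n).1).2 (integrable_sq_of_abs_le (hFi n) (hM n))
  have hR : ∀ n, ∫ x, F n x ^ 2 ≤ 4 - b := fun n =>
    (integral_sq_le_of_abs_le (hFi n) (hM n)).trans
      (mul_le_of_le_one_right ((abs_nonneg _).trans (hM n 0)) (hN n))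
  obtain ⟨u, hu2, σ, hσ, hFu⟩ := exists_subseq_tendstoWeaklyL2 hL2 hR
  have hu : Integrable u := hFu.integrable (fun n => hFi _) (fun n => hN _) hu2
  have hle := fun n => (hF (σ n)).FTr_le_indicator (hN (σ n))
  have hlim : Tendsto (fun n => ∫ t, FTr (F (σ n)) t) atTop (𝓝 c) := by
    simpa only [(hF _).integral_FTr] using! hc.comp hσ.tendsto_atTop
  have hk := integrable_indicator_Ioo 1
  have hui := hFu.integrable_FTr (fun n => hFi _) hu hk hle (fun n => (hF _).integrable_FTr) hlim
  obtain ⟨G, hG, hG0, hGu⟩ := exists_admissible_of_integrable_FTr hu hui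
    (FTr_nonpos_of_ae_le_indicator hu (hFu.FTr_ae_le (fun n => hFi _) hu hk hle))
  refine ⟨G, hG, hGu.trans (hFu.integral_abs_le (fun n => hFi _) (fun n => hN _) hu), ?_⟩
  rw [hG0]
  exact hFu.le_integral_FTr (fun n => hFi _) hu hk hle (fun n => (hF _).integrable_FTr) hlim

theorem integrable_FTr_of_contDiff {F : ℝ → ℝ} (hc : HasCompactSupport F) (hF : ContDiff ℝ ∞ F) :
    Integrable (FTr F) := by
  have hc' : HasCompactSupport fun x => (F x : ℂ) := hc.comp_left Complex.ofReal_zero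
  have h := (𝓕 (hc'.toSchwartzMap (Complex.ofRealCLM.contDiff.comp hF))).integrable (μ := volume)
  rw [SchwartzMap.fourier_coe] at h
  exact h.re

theorem exists_admissible_apply_zero_pos : ∃ F, Admissible F ∧ 0 < F 0 := by
  let b : ContDiffBump (0 : ℝ) := ⟨1 / 2, 1, by norm_num, by norm_num⟩
  have hi : Integrable (FTr b) := integrable_FTr_of_contDiff b.hasCompactSupport b.contDiff
  refine ⟨FTr b, ⟨continuous_FTr b.integrable, hi, FTr_neg b, fun t ht => ?_⟩, ?_⟩
  · rw [FTr_FTr b.neg b.continuous b.integrable hi,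
      b.zero_of_le_dist (by simpa [b] using ht)]
  · rw [FTr_zero]
    exact b.integral_pos

theorem CcalPlusInf_eq_sSup :
    CcalPlusInf = sSup ((fun F : ℝ → ℝ => F 0 / ∫ x, |F x|) '' {F | Admissible F ∧ F ≠ 0}) := by
  refine congrArg sSup (Set.ext fun r => ⟨?_, ?_⟩)
  · rintro ⟨F, hc, hi, h0, he, hle, rfl⟩
    exact ⟨F, ⟨⟨hc, hi, he, hle⟩, h0⟩, rfl⟩
  · rintro ⟨F, ⟨hF, h0⟩, rfl⟩
    exact ⟨F, hF.continuous, hF.integrable, h0, hF.even, hF.nonpos, rfl⟩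

theorem bddAbove_div_integral_image :
    BddAbove ((fun F : ℝ → ℝ => F 0 / ∫ x, |F x|) '' {F | Admissible F ∧ F ≠ 0}) := by
  refine ⟨2, ?_⟩
  rintro _ ⟨F, ⟨hF, -⟩, rfl⟩
  exact div_le_of_le_mul₀ (integral_nonneg fun x => abs_nonneg _) zero_le_two hF.apply_zero_le

namespace Admissible

variable {F : ℝ → ℝ}

theorem integral_abs_pos (hF : Admissible F) (h0 : 0 < F 0) : 0 < ∫ x, |F x| :=
  pos_of_mul_pos_right (h0.trans_le hF.apply_zero_le) zero_le_two

theorem div_integral_le_CcalPlusInf (hF : Admissible F) (h0 : F ≠ 0) :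
    F 0 / ∫ x, |F x| ≤ CcalPlusInf := by
  rw [CcalPlusInf_eq_sSup]
  exact le_csSup bddAbove_div_integral_image ⟨F, ⟨hF, h0⟩, rfl⟩

end Admissible

theorem CcalPlusInf_pos : 0 < CcalPlusInf := by
  obtain ⟨F, hF, h0⟩ := exists_admissible_apply_zero_pos
  exact (div_pos h0 (hF.integral_abs_pos h0)).trans_le
    (hF.div_integral_le_CcalPlusInf (Function.ne_iff.2 ⟨0, h0.ne'⟩))

theorem exists_admissible_seq_tendsto_CcalPlusInf :
    ∃ F : ℕ → ℝ → ℝ, (∀ n, Admissible (F n)) ∧ (∀ n, ∫ x, |F n x| ≤ 1) ∧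
      Tendsto (fun n => F n 0) atTop (𝓝 CcalPlusInf) := by
  obtain ⟨F₀, hF₀, h0⟩ := exists_admissible_apply_zero_pos
  have hne : {F : ℝ → ℝ | Admissible F ∧ F ≠ 0}.Nonempty :=
    ⟨F₀, hF₀, Function.ne_iff.2 ⟨0, h0.ne'⟩⟩
  obtain ⟨r, -, hr, hmem⟩ := exists_seq_tendsto_sSup (hne.image _) bddAbove_div_integral_image
  choose F hF hFr using hmem
  have hN : ∀ n, 0 ≤ (∫ x, |F n x|)⁻¹ := fun n =>
    inv_nonneg.2 (integral_nonneg fun x => abs_nonneg _)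
  refine ⟨fun n x => (∫ x, |F n x|)⁻¹ * F n x, fun n => (hF n).1.const_mul (hN n), fun n => ?_, ?_⟩
  · simp only [abs_mul, integral_const_mul, abs_of_nonneg (hN n)]
    exact inv_mul_le_one
  · rw [CcalPlusInf_eq_sSup]
    simpa only [← div_eq_inv_mul, hFr] using hr

/-- Existence of an extremizer in ℰ⁺ for 𝒞⁺(∞). -/
theorem exists_extremizer_CcalPlusInf :
    ∃ G : ℝ → ℝ, Continuous G ∧ Integrable G ∧ G ≠ 0 ∧ (∀ x, G (-x) = G x) ∧
      (∀ t : ℝ, 1 ≤ |t| → FTr G t ≤ 0) ∧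
      G 0 / (∫ x : ℝ, |G x|) = CcalPlusInf := by
  obtain ⟨F, hF, hN, hlim⟩ := exists_admissible_seq_tendsto_CcalPlusInf
  obtain ⟨G, hG, hG1, hGC⟩ := exists_admissible_of_tendsto hF hN hlim
  have hG0 : 0 < G 0 := CcalPlusInf_pos.trans_le hGC
  have hne : G ≠ 0 := Function.ne_iff.2 ⟨0, hG0.ne'⟩
  refine ⟨G, hG.continuous, hG.integrable, hne, hG.even, hG.nonpos,
    (hG.div_integral_le_CcalPlusInf hne).antisymm ?_⟩
  rw [le_div_iff₀ (hG.integral_abs_pos hG0)]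
  exact (mul_le_of_le_one_right CcalPlusInf_pos.le hG1).trans hGC
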